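/- There exist constants γ₀ > 0 and ε₁ > 0, depending only on C₀, n and d, such that the following holds. Let R₀ be a cube centered at a point of supp(μ) and let α > γ₀. For x ∈ R₀ ∩ supp(μ), write δ(x, 2R₀) := ∫_{Q' ∖ {x}} |y−x|^{-n} dμ(y), where Q' is the smallest cube centered at x containing 2R₀. If δ(x, 2R₀) > α, then there exists a (2,2^{d+1})-doubling cube Q ⊂ 2R₀ centered at x satisfying |δ(Q, 2R₀) − α| ≤ ε₁; here ε₁ does not depend on α. -/

import Mathlib

open MeasureTheory Metric Set Filter
open scoped ENNReal NNReal

noncomputable section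

/-- The ambient Euclidean space `ℝ^d`. -/
abbrev Euc (d : ℕ) := EuclideanSpace ℝ (Fin d)

/-- A closed axis-parallel cube in `ℝ^d`, given by its center and side length. -/
structure Cube (d : ℕ) where
  center : Euc d
  side : ℝ

namespace Cube

variable {d : ℕ}

/-- The set of points of the cube. -/
def toSet (Q : Cube d) : Set (Euc d) := {x | ∀ i, |x i - Q.center i| ≤ Q.side / 2}

/-- The concentric dilation `ρQ`. -/
def dilate (Q : Cube d) (ρ : ℝ) : Cube d := ⟨Q.center, ρ * Q.side⟩

/-- `Q.encl R` is the smallest cube concentric with `Q` containing `Q ∪ R`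
(denoted `Q_R` in the paper). -/
def encl (Q R : Cube d) : Cube d :=
  ⟨Q.center, max Q.side (⨆ i, 2 * |R.center i - Q.center i| + R.side)⟩

end Cube

variable {d : ℕ}

/-- The support of a measure: the points all of whose neighbourhoods have positive
measure. -/
def msupport (μ : Measure (Euc d)) : Set (Euc d) := {x | ∀ r > 0, 0 < μ (ball x r)}

/-- A cube of the lattice: positive side length and centered at a point of `supp μ`. -/
def IsCube (μ : Measure (Euc d)) (Q : Cube d) : Prop :=
  Q.center ∈ msupport μ ∧ 0 < Q.side

/-- The growth condition `μ(B(x,r)) ≤ C₀ rⁿ` for all `x ∈ supp μ`, `r > 0`. -/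
def GrowthCond (μ : Measure (Euc d)) (C₀ n : ℝ) : Prop :=
  ∀ x ∈ msupport μ, ∀ r : ℝ, 0 < r → μ (ball x r) ≤ ENNReal.ofReal (C₀ * r ^ n)

/-- The coefficient `δ(Q,R)`. -/
def cdelta (μ : Measure (Euc d)) (n : ℝ) (Q R : Cube d) : ℝ :=
  max (∫ x in (Q.encl R).toSet \ Q.toSet, ‖x - Q.center‖ ^ (-n) ∂μ)
      (∫ x in (R.encl Q).toSet \ R.toSet, ‖x - R.center‖ ^ (-n) ∂μ)

/-- An `(α,β)`-doubling cube: `μ(αQ) ≤ β μ(Q)`. -/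
def IsDoublingWith (μ : Measure (Euc d)) (α β : ℝ) (Q : Cube d) : Prop :=
  μ (Q.dilate α).toSet ≤ ENNReal.ofReal β * μ Q.toSet

/-- A `(2,2^(d+1))`-doubling cube. -/
def IsDoubling (μ : Measure (Euc d)) (Q : Cube d) : Prop :=
  μ (Q.dilate 2).toSet ≤ 2 ^ (d + 1) * μ Q.toSet

/-- An `n`-dimensional Calderón–Zygmund kernel with size constant `C₁`,
regularity constant `C₂` and regularity exponent `δ`. -/
structure IsCZKernel (d : ℕ) (n C₁ C₂ δ : ℝ) (k : Euc d → Euc d → ℝ) : Prop where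
  measurable : Measurable (Function.uncurry k)
  size : ∀ x y, x ≠ y → |k x y| ≤ C₁ / ‖x - y‖ ^ n
  reg : ∀ x x' y : Euc d, ‖x - x'‖ ≤ ‖x - y‖ / 2 →
    |k x y - k x' y| + |k y x - k y x'| ≤ C₂ * ‖x - x'‖ ^ δ / ‖x - y‖ ^ (n + δ)

/-- The truncated operator `T_ε`. -/
def trunc (μ : Measure (Euc d)) (k : Euc d → Euc d → ℝ) (ε : ℝ) (f : Euc d → ℝ)
    (x : Euc d) : ℝ :=
  ∫ y in {y | ε < dist x y}, k x y * f y ∂μ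

/-- `T_ε χ_Q`, the truncated operator applied to the characteristic function of a
cube `Q`. -/
def truncCube (μ : Measure (Euc d)) (k : Euc d → Euc d → ℝ) (ε : ℝ) (Q : Cube d)
    (x : Euc d) : ℝ :=
  ∫ y in {y | ε < dist x y} ∩ Q.toSet, k x y ∂μ

/-- The function representing `T_ε(1)` modulo additive constants, relative to a
base point `x₀`. -/
def truncOne (μ : Measure (Euc d)) (k : Euc d → Euc d → ℝ) (x₀ : Euc d) (ε : ℝ)
    (x : Euc d) : ℝ :=
  ∫ y, ({y | ε < dist x y}.indicator (fun z => k x z) y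
      - {y | ε < dist x₀ y}.indicator (fun z => k x₀ z) y) ∂μ

/-- `f ∈ BMO_ρ(μ)` with constant `C`. -/
def BMOWith (μ : Measure (Euc d)) (ρ C : ℝ) (f : Euc d → ℝ) : Prop :=
  ∀ Q : Cube d, IsCube μ Q →
    ∫ x in Q.toSet, |f x - ⨍ y in Q.toSet, f y ∂μ| ∂μ ≤ C * (μ (Q.dilate ρ).toSet).toReal

/-- `f ∈ RBMO(μ)` with constant `C`. -/
def RBMOWith (μ : Measure (Euc d)) (n C : ℝ) (f : Euc d → ℝ) : Prop :=
  (∀ Q : Cube d, IsCube μ Q → IsDoubling μ Q →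
    ∫ x in Q.toSet, |f x - ⨍ y in Q.toSet, f y ∂μ| ∂μ ≤ C * (μ Q.toSet).toReal) ∧
  (∀ Q R : Cube d, IsCube μ Q → IsCube μ R → IsDoubling μ Q → IsDoubling μ R →
    Q.toSet ⊆ R.toSet →
    |(⨍ x in Q.toSet, f x ∂μ) - ⨍ x in R.toSet, f x ∂μ| ≤ C * (1 + cdelta μ n Q R))

/-- The distance between two sets. -/
def setDist (s t : Set (Euc d)) : ℝ := sInf (Set.image2 dist s t)

/-- `δ(x, R)` for a point `x`, defined through the smallest cube centered at `x`
containing `R`; with values in `[0,∞]`. -/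
def deltaPt (μ : Measure (Euc d)) (n : ℝ) (x : Euc d) (R : Cube d) : ℝ≥0∞ :=
  ∫⁻ y in ((Cube.mk x 0).encl R).toSet \ {x}, ENNReal.ofReal (‖y - x‖ ^ (-n)) ∂μ

/-- `δ(Q, ℝ^d)`, with values in `[0,∞]`. -/
def deltaFull (μ : Measure (Euc d)) (n : ℝ) (Q : Cube d) : ℝ≥0∞ :=
  ∫⁻ x in Q.toSetᶜ, ENNReal.ofReal (‖x - Q.center‖ ^ (-n)) ∂μ

/-- The integral operator with kernel `s`. -/
def Sop (μ : Measure (Euc d)) (s : Euc d → Euc d → ℝ) (f : Euc d → ℝ) (x : Euc d) : ℝ :=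
  ∫ y, s x y * f y ∂μ

/-- The difference operators `D_k = S_k - S_{k-1}`. -/
def Dop (μ : Measure (Euc d)) (s : ℤ → Euc d → Euc d → ℝ) (j : ℤ) (f : Euc d → ℝ) :
    Euc d → ℝ :=
  fun x => Sop μ (s j) f x - Sop μ (s (j - 1)) f x

/-!
Fix `x` and compare the annular integral `I s` of `‖y - x‖ ^ (-n)` between the cube of side `s`
and the outer cube with the density `θ s = μ(Q(x, s)) / s ^ n`, which the growth condition bounds.
Shrinking a cube by a factor `ρ` raises `I` by at most `(2ρ)ⁿ` times the density of the larger
cube, and if the smaller cube is not `(ρ, β)`-doubling, its density is smaller by the factor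
`ρⁿ / β < 1`. Hence, for a suitable constant `b`, the potential `I + bθ` does not increase when
passing to a non-doubling cube. Take the first cube of the geometric sequence for which `I` exceeds
`α`, and go back to the last doubling cube up to that one. The potential has not increased in
between, so on that cube `I` differs from `α` by at most `b sup θ`. There is such a doubling cube,
because otherwise the potential would never exceed its value at the start, which is less than `α`.
-/

open scoped Topology

section Potential

variable {P : ℕ → Prop}

theorem le_zero_or_exists_le_of_not_imp_succ_le {β : Type*} [Preorder β] {Φ : ℕ → β}
    (hP : ∀ k, ¬P (k + 1) → Φ (k + 1) ≤ Φ k) (k : ℕ) :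
    Φ k ≤ Φ 0 ∨ ∃ m ≤ k, P m ∧ Φ k ≤ Φ m := by
  induction k with
  | zero => exact Or.inl le_rfl
  | succ k ih =>
    by_cases hk : P (k + 1)
    · exact Or.inr ⟨k + 1, le_rfl, hk, le_rfl⟩
    · have hΦ := hP k hk
      rcases ih with h₀ | ⟨m, hmk, hm, hΦm⟩
      · exact Or.inl (hΦ.trans h₀)
      · exact Or.inr ⟨m, hmk.trans k.le_succ, hm, hΦ.trans hΦm⟩

theorem exists_abs_sub_le_of_not_imp_potential_succ_le {I Φ : ℕ → ℝ} {K α : ℝ} (hI : Monotone I)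
    (hIΦ : ∀ k, I (k + 1) ≤ Φ k) (hΦI : ∀ k, Φ k ≤ I k + K)
    (hP : ∀ k, ¬P (k + 1) → Φ (k + 1) ≤ Φ k) (h₀ : I 0 + K < α) (hα : ∃ k, α < I k) :
    ∃ m, P m ∧ |I m - α| ≤ K := by
  classical
  have hΦ : ∀ k, I k ≤ Φ k := fun k => (hI k.le_succ).trans (hIΦ k)
  have hK : 0 ≤ K := by linarith [hΦ 0, hΦI 0]
  obtain ⟨k, hk, hmin⟩ : ∃ k, α < I k ∧ ∀ j < k, I j ≤ α :=
    ⟨Nat.find hα, Nat.find_spec hα, fun _ hj => not_lt.1 (Nat.find_min hα hj)⟩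
  have hk_le : I k ≤ α + K := by
    cases k with
    | zero => linarith
    | succ p => linarith [hIΦ p, hΦI p, hmin p p.lt_succ_self]
  rcases le_zero_or_exists_le_of_not_imp_succ_le hP k with h | ⟨m, hmk, hm, hΦm⟩
  · linarith [hΦ k, hΦI 0]
  · refine ⟨m, hm, abs_sub_le_iff.2 ⟨?_, ?_⟩⟩
    · linarith [hI hmk]
    · linarith [hΦ k, hΦI m]

end Potential

namespace Cube

theorem toSet_mk_mono (x : Euc d) : Monotone fun s => (mk x s).toSet :=
  fun _ _ hst _ hy i => (hy i).trans (div_le_div_of_nonneg_right hst zero_le_two)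

theorem mem_toSet_mk_comm {x y : Euc d} {s : ℝ} : y ∈ (mk x s).toSet ↔ x ∈ (mk y s).toSet :=
  forall_congr' fun i => by rw [abs_sub_comm]

theorem isCompact_toSet (Q : Cube d) : IsCompact Q.toSet := by
  have hQ : Q.toSet = PiLp.homeomorph 2 (fun _ : Fin d => ℝ) ⁻¹'
      univ.pi fun i => closedBall (Q.center i) (Q.side / 2) := by
    ext y
    simp only [toSet, mem_preimage, mem_univ_pi, mem_closedBall, Real.dist_eq]
    rfl
  rw [hQ, Homeomorph.isCompact_preimage]
  exact isCompact_univ_pi fun i => isCompact_closedBall _ _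

theorem measurableSet_toSet (Q : Cube d) : MeasurableSet Q.toSet :=
  Q.isCompact_toSet.isClosed.measurableSet

theorem dist_center_le_of_mem_toSet {Q : Cube d} (hQ : 0 ≤ Q.side) {y : Euc d}
    (hy : y ∈ Q.toSet) : dist y Q.center ≤ √d * (Q.side / 2) := by
  calc dist y Q.center ≤ √d * dist (WithLp.ofLp y) (WithLp.ofLp Q.center) := by
        simpa [Real.sqrt_eq_rpow] using
          (PiLp.antilipschitzWith_ofLp 2 fun _ : Fin d => ℝ).le_mul_dist y Q.center
    _ ≤ √d * (Q.side / 2) := by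
        gcongr
        exact (dist_pi_le_iff (by positivity)).2 hy

theorem toSet_subset_ball [NeZero d] {Q : Cube d} (hQ : 0 < Q.side) :
    Q.toSet ⊆ ball Q.center (√d * Q.side) := fun y hy =>
  have hd : 0 < √(d : ℝ) := Real.sqrt_pos.2 (Nat.cast_pos.2 (NeZero.pos d))
  (dist_center_le_of_mem_toSet hQ.le hy).trans_lt (by gcongr; exact half_lt_self hQ)

theorem half_side_lt_norm_sub_of_notMem_toSet {Q : Cube d} {y : Euc d} (hy : y ∉ Q.toSet) :
    Q.side / 2 < ‖y - Q.center‖ := by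
  obtain ⟨i, hi⟩ : ∃ i, Q.side / 2 < |y i - Q.center i| := by simpa [toSet] using hy
  exact hi.trans_le (PiLp.norm_apply_le (y - Q.center) i)

theorem iInter_toSet_mk_eq_singleton {ι : Type*} {l : Filter ι} [l.NeBot] {σ : ι → ℝ}
    (hσ₀ : ∀ k, 0 ≤ σ k) (hσ : Tendsto σ l (𝓝 0)) (x : Euc d) :
    ⋂ k, (mk x (σ k)).toSet = {x} := by
  refine subset_antisymm (fun y hy => ?_) ?_
  · refine PiLp.ext fun i => sub_eq_zero.1 <| abs_nonpos_iff.1 ?_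
    have hσ' : Tendsto (fun k => σ k / 2) l (𝓝 0) := by simpa using hσ.div_const 2
    exact ge_of_tendsto' hσ' fun k => mem_iInter.1 hy k i
  · rw [singleton_subset_iff]
    exact mem_iInter.2 fun k i => by simpa using div_nonneg (hσ₀ k) zero_le_two

/-- The side length of the smallest cube centered at `x` containing `R`: the supremum that
occurs in `Cube.encl`. -/
def enclSide (x : Euc d) (R : Cube d) : ℝ := ⨆ i, 2 * |R.center i - x i| + R.side

section Encl

variable {Q R : Cube d} {x : Euc d}

theorem le_enclSide (x : Euc d) (R : Cube d) (i : Fin d) :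
    2 * |R.center i - x i| + R.side ≤ enclSide x R :=
  le_ciSup (f := fun i => 2 * |R.center i - x i| + R.side) (finite_range _).bddAbove i

theorem toSet_subset_toSet_of_enclSide_le (h : enclSide R.center Q ≤ R.side) :
    Q.toSet ⊆ R.toSet := fun y hy i => by
  linarith [hy i, (le_enclSide R.center Q i).trans h, abs_sub_le (y i) (Q.center i) (R.center i)]

theorem encl_eq_self_of_enclSide_le (h : enclSide R.center Q ≤ R.side) : R.encl Q = R :=
  congrArg (mk R.center) <| max_eq_left h

variable [NeZero d]

theorem side_le_enclSide (x : Euc d) (R : Cube d) : R.side ≤ enclSide x R :=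
  (le_add_of_nonneg_left (by positivity)).trans (le_enclSide x R 0)

theorem enclSide_le_add {s : ℝ} (hR : R.center ∈ (mk x s).toSet) : enclSide x R ≤ s + R.side :=
  ciSup_le fun i => by linarith [show |R.center i - x i| ≤ s / 2 from hR i]

theorem encl_eq_mk_enclSide (h : Q.side ≤ R.side) :
    Q.encl R = mk Q.center (enclSide Q.center R) :=
  congrArg (mk Q.center) <| max_eq_right <| h.trans <| side_le_enclSide Q.center R

end Encl

end Cube

/-- The integral of the kernel `‖y - x‖ ^ (-n)` over the cube of side `t` centered at `x` minus the
concentric cube of side `s`, that is, the coefficient `δ` of two concentric cubes. -/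
def annularDelta (μ : Measure (Euc d)) (n : ℝ) (x : Euc d) (s t : ℝ) : ℝ :=
  ∫ y in (Cube.mk x t).toSet \ (Cube.mk x s).toSet, ‖y - x‖ ^ (-n) ∂μ

/-- The `n`-dimensional density `μ(Q) / ℓ(Q)ⁿ` of the cube `Q` of side `s` centered at `x`. -/
def cubeDensity (μ : Measure (Euc d)) (n : ℝ) (x : Euc d) (s : ℝ) : ℝ :=
  μ.real (Cube.mk x s).toSet / s ^ n

/-- The growth condition `μ(B(x,r)) ≤ C₀ rⁿ` for all `r > 0`, at a single point `x`. -/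
def GrowthAt (μ : Measure (Euc d)) (C₀ n : ℝ) (x : Euc d) : Prop :=
  ∀ r : ℝ, 0 < r → μ (ball x r) ≤ ENNReal.ofReal (C₀ * r ^ n)

variable {μ : Measure (Euc d)} {n ρ β : ℝ} {x : Euc d} {s t u : ℝ}

theorem deltaPt_eq_setLIntegral [NeZero d] {R : Cube d} (hR : 0 ≤ R.side) :
    deltaPt μ n x R = ∫⁻ y in (Cube.mk x (Cube.enclSide x R)).toSet \ {x},
      ENNReal.ofReal (‖y - x‖ ^ (-n)) ∂μ := by
  rw [deltaPt, Cube.encl_eq_mk_enclSide hR]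

theorem annularDelta_nonneg : 0 ≤ annularDelta μ n x s t :=
  integral_nonneg fun _ => by positivity

theorem cdelta_eq_annularDelta [NeZero d] {R : Cube d}
    (h : Cube.enclSide R.center ⟨x, s⟩ ≤ R.side) :
    cdelta μ n ⟨x, s⟩ R = annularDelta μ n x s (Cube.enclSide x R) := by
  have hs : s ≤ R.side := (Cube.side_le_enclSide R.center ⟨x, s⟩).trans h
  rw [cdelta, Cube.encl_eq_self_of_enclSide_le h, Cube.encl_eq_mk_enclSide hs, sdiff_self,
    setIntegral_empty]
  exact max_eq_left annularDelta_nonneg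

theorem cubeDensity_nonneg (hs : 0 ≤ s) : 0 ≤ cubeDensity μ n x s := by
  unfold cubeDensity
  positivity

theorem GrowthAt.cubeDensity_le [NeZero d] {C₀ : ℝ} (hμ : GrowthAt μ C₀ n x) (hs : 0 < s) :
    cubeDensity μ n x s ≤ |C₀| * √d ^ n := by
  have hd : 0 < √(d : ℝ) := Real.sqrt_pos.2 (Nat.cast_pos.2 (NeZero.pos d))
  refine (div_le_iff₀ (by positivity)).2 (ENNReal.toReal_le_of_le_ofReal (by positivity) ?_)
  calc μ (Cube.mk x s).toSet ≤ μ (ball x (√d * s)) := measure_mono (Cube.toSet_subset_ball hs)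
    _ ≤ ENNReal.ofReal (C₀ * (√d * s) ^ n) := hμ _ (by positivity)
    _ ≤ ENNReal.ofReal (|C₀| * √d ^ n * s ^ n) := by
      rw [Real.mul_rpow hd.le hs.le, ← mul_assoc]
      gcongr
      exact le_abs_self C₀

theorem norm_rpow_neg_le_of_notMem_toSet (hn : 0 ≤ n) (hs : 0 < s) {y : Euc d}
    (hy : y ∉ (Cube.mk x s).toSet) : ‖‖y - x‖ ^ (-n)‖ ≤ (s / 2) ^ (-n) := by
  rw [Real.norm_of_nonneg (by positivity)]
  exact Real.rpow_le_rpow_of_nonpos (by positivity)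
    (Cube.half_side_lt_norm_sub_of_notMem_toSet hy).le (neg_nonpos.2 hn)

section LocallyFinite

variable [IsLocallyFiniteMeasure μ]

theorem mul_cubeDensity_le_of_not_isDoublingWith (hρ : 0 < ρ) (hβ : 0 ≤ β) (hs : 0 < s)
    (h : ¬IsDoublingWith μ ρ β ⟨x, s⟩) :
    β * cubeDensity μ n x s ≤ ρ ^ n * cubeDensity μ n x (ρ * s) := by
  have hlt : ENNReal.ofReal β * μ (Cube.mk x s).toSet ≤ μ (Cube.mk x (ρ * s)).toSet :=
    (not_le.1 h).le
  have hreal : β * μ.real (Cube.mk x s).toSet ≤ μ.real (Cube.mk x (ρ * s)).toSet := by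
    simpa [Measure.real, hβ] using
      ENNReal.toReal_mono (Cube.isCompact_toSet _).measure_lt_top.ne hlt
  calc β * cubeDensity μ n x s = β * μ.real (Cube.mk x s).toSet / s ^ n := by
        rw [cubeDensity, mul_div_assoc]
    _ ≤ μ.real (Cube.mk x (ρ * s)).toSet / s ^ n := by gcongr
    _ = ρ ^ n * cubeDensity μ n x (ρ * s) := by
        rw [cubeDensity, Real.mul_rpow hρ.le hs.le]
        field_simp

theorem integrableOn_toSet_sdiff_toSet (hn : 0 ≤ n) (hs : 0 < s) :
    IntegrableOn (fun y => ‖y - x‖ ^ (-n)) ((Cube.mk x t).toSet \ (Cube.mk x s).toSet) μ := by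
  refine Measure.integrableOn_of_bounded (M := (s / 2) ^ (-n))
    ((Cube.isCompact_toSet _).measure_lt_top.trans_le' (measure_mono sdiff_subset)).ne
    (Measurable.aestronglyMeasurable (by fun_prop)) ?_
  filter_upwards [ae_restrict_mem
    ((Cube.measurableSet_toSet _).diff (Cube.measurableSet_toSet _))] with y hy
  exact norm_rpow_neg_le_of_notMem_toSet hn hs hy.2

theorem annularDelta_le_mul_cubeDensity (hn : 0 ≤ n) (hs : 0 < s) (ht : 0 < t) :
    annularDelta μ n x s t ≤ (2 * t / s) ^ n * cubeDensity μ n x t := by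
  have hfin := (Cube.isCompact_toSet (Cube.mk x t)).measure_lt_top (μ := μ)
  calc annularDelta μ n x s t
      ≤ (s / 2) ^ (-n) * μ.real ((Cube.mk x t).toSet \ (Cube.mk x s).toSet) :=
        (le_abs_self _).trans <| norm_setIntegral_le_of_norm_le_const
          (hfin.trans_le' (measure_mono sdiff_subset))
          fun y hy => norm_rpow_neg_le_of_notMem_toSet hn hs hy.2
    _ ≤ (s / 2) ^ (-n) * μ.real (Cube.mk x t).toSet := by
        gcongr
        exacts [hfin.ne, sdiff_subset]
    _ = (2 * t / s) ^ n * cubeDensity μ n x t := by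
        rw [cubeDensity, show 2 * t / s = t / (s / 2) by field_simp,
          Real.div_rpow ht.le (by positivity), Real.rpow_neg (by positivity)]
        field_simp

theorem annularDelta_add (hn : 0 ≤ n) (hs : 0 < s) (hst : s ≤ t) (htu : t ≤ u) :
    annularDelta μ n x s t + annularDelta μ n x t u = annularDelta μ n x s u := by
  rw [annularDelta, annularDelta, annularDelta, ← setIntegral_union
    (disjoint_sdiff_right.mono_left sdiff_subset)
    ((Cube.measurableSet_toSet _).diff (Cube.measurableSet_toSet _))
    (integrableOn_toSet_sdiff_toSet hn hs) (integrableOn_toSet_sdiff_toSet hn (hs.trans_le hst)),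
    union_comm, sdiff_union_sdiff_cancel (Cube.toSet_mk_mono x htu) (Cube.toSet_mk_mono x hst)]

theorem annularDelta_anti_left (hn : 0 ≤ n) (hs : 0 < s) (hst : s ≤ t) (htu : t ≤ u) :
    annularDelta μ n x t u ≤ annularDelta μ n x s u := by
  rw [← annularDelta_add hn hs hst htu]
  exact le_add_of_nonneg_left annularDelta_nonneg

theorem annularDelta_le_add_mul_cubeDensity (hn : 0 ≤ n) (hρ : 1 ≤ ρ) (hs : 0 < s)
    (hst : ρ * s ≤ t) :
    annularDelta μ n x s t ≤
      annularDelta μ n x (ρ * s) t + (2 * ρ) ^ n * cubeDensity μ n x (ρ * s) := by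
  have hann := annularDelta_le_mul_cubeDensity (μ := μ) (x := x) hn hs
    (mul_pos (zero_lt_one.trans_le hρ) hs)
  rw [show 2 * (ρ * s) / s = 2 * ρ by field_simp] at hann
  rw [← annularDelta_add hn hs (le_mul_of_one_le_left hs.le hρ) hst]
  linarith

theorem exists_lt_annularDelta_of_lt_setLIntegral {α : ℝ} {σ : ℕ → ℝ} (hn : 0 ≤ n)
    (hσ₀ : ∀ k, 0 < σ k) (hσ : Antitone σ) (hσ' : Tendsto σ atTop (𝓝 0))
    (h : ENNReal.ofReal α <
      ∫⁻ y in (Cube.mk x t).toSet \ {x}, ENNReal.ofReal (‖y - x‖ ^ (-n)) ∂μ) :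
    ∃ k, α < annularDelta μ n x (σ k) t := by
  have hmono : Monotone fun k => (Cube.mk x t).toSet \ (Cube.mk x (σ k)).toSet :=
    fun _ _ hij => sdiff_subset_sdiff_right (Cube.toSet_mk_mono x (hσ hij))
  rw [← Cube.iInter_toSet_mk_eq_singleton (fun k => (hσ₀ k).le) hσ' x, sdiff_iInter,
    setLIntegral_iUnion_of_directed _ hmono.directed_le, lt_iSup_iff] at h
  obtain ⟨k, hk⟩ := h
  rw [← ofReal_integral_eq_lintegral_ofReal (integrableOn_toSet_sdiff_toSet hn (hσ₀ k))
    (Eventually.of_forall fun _ => by positivity)] at hk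
  exact ⟨k, (ENNReal.ofReal_lt_ofReal_iff'.1 hk).1⟩

end LocallyFinite

/-- The weight of the density in `deltaPotential`. It solves `b = (2ρ)ⁿ + b ρⁿ / β`, so that the
gain of the annular integral in one step is absorbed by the drop of the density. -/
def potentialWeight (n ρ β : ℝ) : ℝ := (2 * ρ) ^ n * (β / (β - ρ ^ n))

/-- The potential `I s + b θ s`, with `I s` the annular integral from side `s` to side `t`,
`θ s` the density of the cube of side `s` and `b` the weight `potentialWeight n ρ β`. -/
def deltaPotential (μ : Measure (Euc d)) (n ρ β : ℝ) (x : Euc d) (t s : ℝ) : ℝ :=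
  annularDelta μ n x s t + potentialWeight n ρ β * cubeDensity μ n x s

theorem potentialWeight_nonneg (hρ : 0 ≤ ρ) (hβ : ρ ^ n < β) : 0 ≤ potentialWeight n ρ β := by
  have hρn : 0 ≤ ρ ^ n := by positivity
  exact mul_nonneg (by positivity) (div_nonneg (by linarith) (by linarith))

theorem potentialWeight_eq_add (hρ : 0 ≤ ρ) (hβ : ρ ^ n < β) :
    potentialWeight n ρ β = (2 * ρ) ^ n + potentialWeight n ρ β * (ρ ^ n / β) := by
  have hβ₀ : β ≠ 0 := ((Real.rpow_nonneg hρ n).trans_lt hβ).ne'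
  have hβρ : β - ρ ^ n ≠ 0 := (sub_pos.2 hβ).ne'
  unfold potentialWeight
  field_simp
  ring

section DeltaPotential

variable [IsLocallyFiniteMeasure μ]

theorem annularDelta_le_deltaPotential_mul (hn : 0 ≤ n) (hρ : 1 ≤ ρ) (hβ : ρ ^ n < β) (hs : 0 < s)
    (hst : ρ * s ≤ t) : annularDelta μ n x s t ≤ deltaPotential μ n ρ β x t (ρ * s) := by
  have hρ₀ : 0 < ρ := zero_lt_one.trans_le hρ
  have hweight : (2 * ρ) ^ n ≤ potentialWeight n ρ β := by
    have hβ₀ : 0 < β := (Real.rpow_nonneg hρ₀.le n).trans_lt hβ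
    have hb := potentialWeight_nonneg hρ₀.le hβ
    rw [potentialWeight_eq_add hρ₀.le hβ]
    exact le_add_of_nonneg_right (by positivity)
  refine (annularDelta_le_add_mul_cubeDensity hn hρ hs hst).trans ?_
  unfold deltaPotential
  gcongr
  exact cubeDensity_nonneg (by positivity)

theorem deltaPotential_le_of_not_isDoublingWith (hn : 0 ≤ n) (hρ : 1 ≤ ρ) (hβ : ρ ^ n < β)
    (hs : 0 < s) (hst : ρ * s ≤ t) (h : ¬IsDoublingWith μ ρ β ⟨x, s⟩) :
    deltaPotential μ n ρ β x t s ≤ deltaPotential μ n ρ β x t (ρ * s) := by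
  have hρ₀ : 0 < ρ := zero_lt_one.trans_le hρ
  have hβ₀ : 0 < β := (Real.rpow_nonneg hρ₀.le n).trans_lt hβ
  have hdensity : cubeDensity μ n x s ≤ ρ ^ n / β * cubeDensity μ n x (ρ * s) := by
    rw [div_mul_eq_mul_div, le_div_iff₀' hβ₀]
    exact mul_cubeDensity_le_of_not_isDoublingWith hρ₀ hβ₀.le hs h
  have hb := potentialWeight_nonneg hρ₀.le hβ
  calc deltaPotential μ n ρ β x t s
      ≤ annularDelta μ n x (ρ * s) t + (2 * ρ) ^ n * cubeDensity μ n x (ρ * s) +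
          potentialWeight n ρ β * (ρ ^ n / β * cubeDensity μ n x (ρ * s)) := by
        unfold deltaPotential
        gcongr
        exact annularDelta_le_add_mul_cubeDensity hn hρ hs hst
    _ = deltaPotential μ n ρ β x t (ρ * s) := by
        rw [deltaPotential]
        linear_combination -cubeDensity μ n x (ρ * s) * potentialWeight_eq_add hρ₀.le hβ

theorem exists_isDoublingWith_abs_annularDelta_sub_le {L T α M : ℝ} (hn : 0 ≤ n) (hρ : 1 < ρ)
    (hβ : ρ ^ n < β) (hM : ∀ s, 0 < s → cubeDensity μ n x s ≤ M) (hL : 0 < L) (hLT : L ≤ T)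
    (hα : (2 * T / L) ^ n * M + potentialWeight n ρ β * M < α)
    (h : ENNReal.ofReal α <
      ∫⁻ y in (Cube.mk x T).toSet \ {x}, ENNReal.ofReal (‖y - x‖ ^ (-n)) ∂μ) :
    ∃ s, 0 < s ∧ s ≤ L ∧ IsDoublingWith μ ρ β ⟨x, s⟩ ∧
      |annularDelta μ n x s T - α| ≤ potentialWeight n ρ β * M := by
  have hρ₀ : 0 < ρ := zero_lt_one.trans hρ
  have hT : 0 < T := hL.trans_le hLT
  let σ : ℕ → ℝ := fun k => L * ρ⁻¹ ^ k
  have hσ₀ (k) : 0 < σ k := by positivity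
  have hσ : Antitone σ :=
    (pow_right_anti₀ (by positivity) (inv_le_one_of_one_le₀ hρ.le)).const_mul hL.le
  have hσ' : Tendsto σ atTop (𝓝 0) := by
    simpa only [mul_zero] using (tendsto_pow_atTop_nhds_zero_of_lt_one (by positivity)
      (inv_lt_one_of_one_lt₀ hρ)).const_mul L
  have hσ_succ (k) : ρ * σ (k + 1) = σ k := by
    simp only [σ, pow_succ]
    field_simp
  have hσL (k) : σ k ≤ L := by simpa [σ] using hσ k.zero_le
  have hσT (k) : ρ * σ (k + 1) ≤ T := (hσ_succ k).trans_le ((hσL k).trans hLT)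
  have hI₀ : annularDelta μ n x (σ 0) T ≤ (2 * T / L) ^ n * M := by
    rw [show σ 0 = L by simp [σ]]
    exact (annularDelta_le_mul_cubeDensity hn hL hT).trans (by gcongr; exact hM T hT)
  obtain ⟨m, hm, hmα⟩ := exists_abs_sub_le_of_not_imp_potential_succ_le
    (I := fun k => annularDelta μ n x (σ k) T) (Φ := fun k => deltaPotential μ n ρ β x T (σ k))
    (P := fun k => IsDoublingWith μ ρ β ⟨x, σ k⟩) (K := potentialWeight n ρ β * M)
    (fun i j hij => annularDelta_anti_left hn (hσ₀ j) (hσ hij) ((hσL i).trans hLT))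
    (fun k => by
      simpa only [hσ_succ] using annularDelta_le_deltaPotential_mul hn hρ.le hβ (hσ₀ _) (hσT k))
    (fun k => by
      unfold deltaPotential
      gcongr
      exacts [potentialWeight_nonneg hρ₀.le hβ, hM _ (hσ₀ k)])
    (fun k hk => by
      simpa only [hσ_succ] using
        deltaPotential_le_of_not_isDoublingWith hn hρ.le hβ (hσ₀ _) (hσT k) hk)
    (by linarith) (exists_lt_annularDelta_of_lt_setLIntegral hn hσ₀ hσ hσ' h)
  exact ⟨σ m, hσ₀ m, hσL m, hm, hmα⟩

end DeltaPotential

theorem isDoublingWith_two_iff_isDoubling {Q : Cube d} :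
    IsDoublingWith μ 2 (2 ^ (d + 1)) Q ↔ IsDoubling μ Q := by
  simp [IsDoublingWith, IsDoubling, ENNReal.ofReal_pow]

theorem exists_doubling_cube_prescribed_delta_general [NeZero d] (n C₀ ρ β : ℝ) (hn : 0 ≤ n)
    (hρ : 1 < ρ) (hβ : ρ ^ n < β) :
    ∃ γ₀ ε₁ : ℝ, 0 < γ₀ ∧ 0 < ε₁ ∧
      ∀ (μ : Measure (Euc d)) [IsLocallyFiniteMeasure μ] (x : Euc d), GrowthAt μ C₀ n x →
      ∀ R₀ : Cube d, 0 < R₀.side → x ∈ R₀.toSet → ∀ α : ℝ, γ₀ < α →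
        ENNReal.ofReal α < deltaPt μ n x (R₀.dilate 2) →
        ∃ Q : Cube d, Q.center = x ∧ 0 < Q.side ∧ Q.toSet ⊆ (R₀.dilate 2).toSet ∧
          IsDoublingWith μ ρ β Q ∧ |cdelta μ n Q (R₀.dilate 2) - α| ≤ ε₁ := by
  have hb := potentialWeight_nonneg (zero_le_one.trans hρ.le) hβ
  let M := |C₀| * √d ^ n
  refine ⟨6 ^ n * M + potentialWeight n ρ β * M + 1, potentialWeight n ρ β * M + 1,
    by positivity, by positivity, ?_⟩
  intro μ _ x hμ R₀ hR₀ hx α hα hδ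
  set T := Cube.enclSide x (R₀.dilate 2)
  have hR₀T : 2 * R₀.side ≤ T := Cube.side_le_enclSide x (R₀.dilate 2)
  have hT : T ≤ R₀.side + 2 * R₀.side := Cube.enclSide_le_add (Cube.mem_toSet_mk_comm.1 hx)
  have hT₀ : 0 < T := by linarith
  have hT_pow : (2 * T / R₀.side) ^ n * M ≤ 6 ^ n * M := by
    have hratio : 2 * T / R₀.side ≤ 6 := by
      rw [div_le_iff₀ hR₀]
      linarith
    gcongr
  rw [deltaPt_eq_setLIntegral (by simpa [Cube.dilate] using hR₀.le)] at hδ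
  obtain ⟨s, hs, hsR₀, hdoubling, hsα⟩ := exists_isDoublingWith_abs_annularDelta_sub_le hn hρ hβ
    (fun _ => hμ.cubeDensity_le) hR₀ (by linarith) (by linarith) hδ
  have hencl : Cube.enclSide R₀.center ⟨x, s⟩ ≤ (R₀.dilate 2).side :=
    (Cube.enclSide_le_add hx).trans (by simp only [Cube.dilate]; linarith)
  refine ⟨⟨x, s⟩, rfl, hs, Cube.toSet_subset_toSet_of_enclSide_le hencl, hdoubling, ?_⟩
  rw [cdelta_eq_annularDelta hencl]
  exact hsα.trans (lt_add_one _).le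

/-- Precise existence of small doubling cubes: if `δ(x, 2R₀) > α > γ₀`, there is a
doubling cube `Q ⊂ 2R₀` centered at `x` with `|δ(Q,2R₀) − α| ≤ ε₁`, where `ε₁` does
not depend on `α`. -/
theorem exists_doubling_cube_prescribed_delta {d : ℕ} (n C₀ : ℝ)
    (hn : 0 < n) (hnd : n ≤ d) :
    ∃ γ₀ ε₁ : ℝ, 0 < γ₀ ∧ 0 < ε₁ ∧
      ∀ (μ : Measure (Euc d)) [IsLocallyFiniteMeasure μ], GrowthCond μ C₀ n →
      ∀ R₀ : Cube d, IsCube μ R₀ → ∀ α : ℝ, γ₀ < α →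
      ∀ x ∈ R₀.toSet ∩ msupport μ,
        ENNReal.ofReal α < deltaPt μ n x (R₀.dilate 2) →
        ∃ Q : Cube d, Q.center = x ∧ 0 < Q.side ∧ Q.toSet ⊆ (R₀.dilate 2).toSet ∧
          IsDoubling μ Q ∧ |cdelta μ n Q (R₀.dilate 2) - α| ≤ ε₁ := by
  have hd : 0 < d := Nat.cast_pos.1 (hn.trans_le hnd)
  have : NeZero d := ⟨hd.ne'⟩
  have hβ : (2 : ℝ) ^ n < 2 ^ (d + 1) := by
    rw [← Real.rpow_natCast]
    exact Real.rpow_lt_rpow_of_exponent_lt one_lt_two (by push_cast; linarith)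
  obtain ⟨γ₀, ε₁, hγ₀, hε₁, h⟩ :=
    exists_doubling_cube_prescribed_delta_general (d := d) n C₀ 2 _ hn.le one_lt_two hβ
  simp only [isDoublingWith_two_iff_isDoubling] at h
  exact ⟨γ₀, ε₁, hγ₀, hε₁, fun μ _ hμ R₀ hR₀ α hα x hx => h μ x (hμ x hx.2) R₀ hR₀.2 hx.1 α hα⟩
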